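/- Let N ≥ 2, let α, β be real numbers with α ≥ max(−1, β/2 − 1), β ≥ max(−1, α/2 − 1) and α² ≠ β², and let σ be an N-qubit operator. If the matrix (1/(α² − β²))·[α·σ − β·σ̃_A − ((α − β)/(2^N + α + β))·Tr(σ)·𝟙] is positive semidefinite, then σ is biseparable across the 1:(N−1) bipartition at qubit 0. -/

import Mathlib

open scoped ComplexOrder

noncomputable section

/-- Separability of an `N`-qubit matrix across the bipartition `X : Xᶜ`. -/
def SepAcross {N : ℕ} (X : Finset (Fin N))
    (σ : Matrix (Fin N → Fin 2) (Fin N → Fin 2) ℂ) : Prop :=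
  ∃ (K : ℕ)
    (A : Fin K → Matrix ({i // i ∈ X} → Fin 2) ({i // i ∈ X} → Fin 2) ℂ)
    (B : Fin K → Matrix ({i // i ∈ Xᶜ} → Fin 2) ({i // i ∈ Xᶜ} → Fin 2) ℂ),
    (∀ k, (A k).PosSemidef) ∧ (∀ k, (B k).PosSemidef) ∧
    ∀ x y, σ x y =
      ∑ k, A k (fun i => x i.1) (fun i => y i.1) * B k (fun i => x i.1) (fun i => y i.1)

/-- Partial transpose with respect to the qubits in `X`. -/
def pt {N : ℕ} (X : Finset (Fin N))
    (σ : Matrix (Fin N → Fin 2) (Fin N → Fin 2) ℂ) :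
    Matrix (Fin N → Fin 2) (Fin N → Fin 2) ℂ :=
  fun x y => σ (fun i => if i ∈ X then y i else x i) (fun i => if i ∈ X then x i else y i)

/-- The Dicke state `|S_k^N⟩`. -/
def dicke (N k : ℕ) : (Fin N → Fin 2) → ℂ :=
  fun x => if (Finset.univ.filter (fun i => x i = 1)).card = k
    then ((Real.sqrt (N.choose k))⁻¹ : ℝ) else 0

/-- The projector onto the symmetric subspace of `N` qubits. -/
def symProj (N : ℕ) : Matrix (Fin N → Fin 2) (Fin N → Fin 2) ℂ :=
  fun x y => ∑ k ∈ Finset.range (N + 1), dicke N k x * star (dicke N k y)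

/-- Full separability of an `N`-qubit matrix. -/
def FullySep {N : ℕ} (σ : Matrix (Fin N → Fin 2) (Fin N → Fin 2) ℂ) : Prop :=
  ∃ (K : ℕ) (A : Fin K → Fin N → Matrix (Fin 2) (Fin 2) ℂ),
    (∀ k i, (A k i).PosSemidef) ∧
    ∀ x y, σ x y = ∑ k, ∏ i, A k i (x i) (y i)

/-- The second Pauli matrix. -/
def pauliY : Matrix (Fin 2) (Fin 2) ℂ := !![0, -Complex.I; Complex.I, 0]

/-- The `N`-qubit operator acting as `σy` on each qubit in `X` and trivially elsewhere. -/
def pauliYat {N : ℕ} (X : Finset (Fin N)) :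
    Matrix (Fin N → Fin 2) (Fin N → Fin 2) ℂ :=
  fun x y => ∏ i, if i ∈ X then pauliY (x i) (y i) else (if x i = y i then 1 else 0)

/-- `(σy@X) · ρ^{T_X} · (σy@X)`. -/
def tildeAt {N : ℕ} (X : Finset (Fin N))
    (ρ : Matrix (Fin N → Fin 2) (Fin N → Fin 2) ℂ) :
    Matrix (Fin N → Fin 2) (Fin N → Fin 2) ℂ :=
  pauliYat X * pt X ρ * pauliYat X

/-- The Hankel matrix `M_l(q)` with entries `q_{i+j+l} / (N choose (i+j+l))`. -/
def hankel (N l : ℕ) (q : ℕ → ℝ) :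
    Matrix (Fin ((N - l) / 2 + 1)) (Fin ((N - l) / 2 + 1)) ℝ :=
  fun i j => q ((i : ℕ) + j + l) / (N.choose ((i : ℕ) + j + l))

/-- The diagonal symmetric state `Σ_k p_k |S_k^N⟩⟨S_k^N|`. -/
def rhoDS (N : ℕ) (p : ℕ → ℝ) : Matrix (Fin N → Fin 2) (Fin N → Fin 2) ℂ :=
  fun x y => ∑ k ∈ Finset.range (N + 1), (p k : ℂ) * dicke N k x * star (dicke N k y)

open Matrix Kronecker in
/-- Cone of separable matrices on `Fin 2 × ι`. -/
def sepCone (ι : Type) [Fintype ι] : AddSubmonoid (Matrix (Fin 2 × ι) (Fin 2 × ι) ℂ) :=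
  AddSubmonoid.closure {M | ∃ (A : Matrix (Fin 2) (Fin 2) ℂ) (B : Matrix ι ι ℂ),
    A.PosSemidef ∧ B.PosSemidef ∧ M = Matrix.of (fun (p q : Fin 2 × ι) => A p.1 q.1 * B p.2 q.2)}

lemma sepCone_prod {ι : Type} [Fintype ι] {A : Matrix (Fin 2) (Fin 2) ℂ} {B : Matrix ι ι ℂ}
    (hA : A.PosSemidef) (hB : B.PosSemidef) :
    Matrix.of (fun (p q : Fin 2 × ι) => A p.1 q.1 * B p.2 q.2) ∈ sepCone ι :=
  AddSubmonoid.subset_closure ⟨A, B, hA, hB, rfl⟩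

lemma avg_phase (a a' b b' c c' d d' : ℂ) :
    (a + b) * (a' + b') * ((c + d) * (c' + d')) + (a - b) * (a' - b') * ((c - d) * (c' - d'))
    + (a + Complex.I * b) * (a' - Complex.I * b') * ((c - Complex.I * d) * (c' + Complex.I * d'))
    + (a - Complex.I * b) * (a' + Complex.I * b') * ((c + Complex.I * d) * (c' - Complex.I * d'))
    = 4 * (a * a' * (c * c' + d * d') + b * b' * (c * c' + d * d') + a * b' * (c * d')
      + a' * b * (c' * d)) := by
  have h : Complex.I ^ 2 = -1 := Complex.I_sq
  have h4 : Complex.I ^ 4 = 1 := Complex.I_pow_four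
  ring_nf
  simp only [h, h4]
  ring

lemma psd_smul {n : Type} {M : Matrix n n ℂ} (hM : M.PosSemidef) {c : ℝ} (hc : 0 ≤ c) :
    ((c : ℂ) • M).PosSemidef :=
  hM.smul (by exact_mod_cast hc)

open Matrix in
lemma psd_orth {ι : Type} [Fintype ι] [DecidableEq ι] (u v : ι → ℂ) (a b s c d : ℝ)
    (ha : star u ⬝ᵥ u = (a : ℂ)) (hb : star v ⬝ᵥ v = (b : ℂ)) (huv : star u ⬝ᵥ v = 0)
    (hs : 0 ≤ s) (hc : 0 ≤ s + c * a) (hd : 0 ≤ s + d * b) :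
    ((s : ℂ) • (1 : Matrix ι ι ℂ) + (c : ℂ) • vecMulVec u (star u)
      + (d : ℂ) • vecMulVec v (star v)).PosSemidef := by
  have ha0 : 0 ≤ a := by
    have : (0 : ℂ) ≤ star u ⬝ᵥ u := dotProduct_star_self_nonneg u
    rw [ha] at this; exact_mod_cast this
  have hb0 : 0 ≤ b := by
    have : (0 : ℂ) ≤ star v ⬝ᵥ v := dotProduct_star_self_nonneg v
    rw [hb] at this; exact_mod_cast this
  have hvu : star v ⬝ᵥ u = 0 := by
    have := congrArg star huv
    rw [← star_dotProduct_star] at this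
    simpa using this
  set U := vecMulVec u (star u) with hU
  set V := vecMulVec v (star v) with hV
  have hUp : U.PosSemidef := posSemidef_vecMulVec_self_star u
  have hVp : V.PosSemidef := posSemidef_vecMulVec_self_star v
  have hUU : U * U = (a : ℂ) • U := by
    rw [hU, vecMulVec_mul_vecMulVec, ha]; ext; simp [vecMulVec]; ring
  have hVV : V * V = (b : ℂ) • V := by
    rw [hV, vecMulVec_mul_vecMulVec, hb]; ext; simp [vecMulVec]; ring
  have hUV : U * V = 0 := by
    rw [hU, hV, vecMulVec_mul_vecMulVec, huv]; ext; simp [vecMulVec]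
  have hVU : V * U = 0 := by
    rw [hU, hV, vecMulVec_mul_vecMulVec, hvu]; ext; simp [vecMulVec]
  set M : Matrix ι ι ℂ := 1 - ((a⁻¹ : ℝ) : ℂ) • U - ((b⁻¹ : ℝ) : ℂ) • V with hM
  have hMh : Mᴴ = M := by
    simp [hM, hUp.1.eq, hVp.1.eq]
  have inv3 : ∀ r : ℝ, ((r⁻¹ : ℝ) : ℂ) * (((r⁻¹ : ℝ) : ℂ) * r) = ((r⁻¹ : ℝ) : ℂ) := by
    intro r
    by_cases hr : r = 0
    · simp [hr]
    · have : (r : ℂ) ≠ 0 := by exact_mod_cast hr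
      push_cast; field_simp
  have hMM : M * M = M := by
    simp only [hM, sub_mul, mul_sub, one_mul, mul_one, smul_mul_assoc, mul_smul_comm, hUU, hVV,
      hUV, hVU, smul_zero, smul_smul, smul_sub, inv3]
    simp
  have hMp : M.PosSemidef := by
    have := posSemidef_conjTranspose_mul_self M
    rwa [hMh, hMM] at this
  have key : ∀ (r e : ℝ) (w : ι → ℂ), 0 ≤ r → star w ⬝ᵥ w = (r : ℂ) → 0 ≤ s + e * r →
      (((e + s * r⁻¹ : ℝ) : ℂ) • vecMulVec w (star w)).PosSemidef := by
    intro r e w hr hw he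
    rcases hr.eq_or_lt with h0 | h0
    · have : w = 0 := by
        rw [← dotProduct_star_self_eq_zero, hw, ← h0]; simp
      rw [this]; simp [PosSemidef.zero]
    · apply psd_smul (posSemidef_vecMulVec_self_star w)
      have : e + s * r⁻¹ = (s + e * r) * r⁻¹ := by field_simp; ring
      rw [this]; positivity
  have h3 := ((psd_smul hMp hs).add (key a c u ha0 ha hc)).add (key b d v hb0 hb hd)
  convert h3 using 1
  rw [hM]
  push_cast
  simp only [smul_sub, add_smul, smul_smul]
  abel

lemma ineq_aux (α γ a b : ℝ) (ha : 0 < a) (hb : 0 < b) (h1 : -1 ≤ α) (h2 : γ ≤ α + 2)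
    (h3 : -(α + 2) ≤ γ) : γ ^ 2 ≤ ((a + b) / a + α) * ((a + b) / b + α) := by
  have e : ((a + b) / a + α) * ((a + b) / b + α) =
      ((1 + α) * (a + b) ^ 2 / (a * b)) + α ^ 2 := by field_simp; ring
  have hab : 0 < a * b := by positivity
  have : 4 ≤ (a + b) ^ 2 / (a * b) := by
    rw [le_div_iff₀ hab]; nlinarith [sq_nonneg (a - b)]
  rw [e, mul_div_assoc]
  nlinarith [sq_abs γ, abs_le.mpr ⟨h3, h2⟩]

open Matrix in
lemma sep_orth {ι : Type} [Fintype ι] [DecidableEq ι] (u v : ι → ℂ) (e f : Fin 2 → ℂ) (a b α β : ℝ)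
    (ha : star u ⬝ᵥ u = (a : ℂ)) (hb : star v ⬝ᵥ v = (b : ℂ)) (huv : star u ⬝ᵥ v = 0)
    (h1 : -1 ≤ α) (h2 : -1 ≤ β) (h3 : β / 2 - 1 ≤ α) (h4 : α / 2 - 1 ≤ β) :
    Matrix.of (fun (p q : Fin 2 × ι) => e p.1 * star (e q.1) * ((a + b) * (1 : Matrix ι ι ℂ) p.2 q.2
          + α * (u p.2 * star (u q.2)) + β * (v p.2 * star (v q.2)))
        + f p.1 * star (f q.1) * ((a + b) * (1 : Matrix ι ι ℂ) p.2 q.2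
          + β * (u p.2 * star (u q.2)) + α * (v p.2 * star (v q.2)))
        + (α - β) * (e p.1 * star (f q.1) * (u p.2 * star (v q.2))
          + f p.1 * star (e q.1) * (v p.2 * star (u q.2)))) ∈ sepCone ι := by
  have ha0 : 0 ≤ a := by
    have : (0 : ℂ) ≤ star u ⬝ᵥ u := dotProduct_star_self_nonneg u
    rw [ha] at this; exact_mod_cast this
  have hb0 : 0 ≤ b := by
    have : (0 : ℂ) ≤ star v ⬝ᵥ v := dotProduct_star_self_nonneg v
    rw [hb] at this; exact_mod_cast this
  have hs : 0 ≤ a + b := by positivity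
  have hE := posSemidef_vecMulVec_self_star e
  have hF := posSemidef_vecMulVec_self_star f
  by_cases h0 : u = 0 ∨ v = 0
  · have H1 := sepCone_prod hE (psd_orth u v a b (a + b) α β ha hb huv hs (by nlinarith) (by nlinarith))
    have H2 := sepCone_prod hF (psd_orth u v a b (a + b) β α ha hb huv hs (by nlinarith) (by nlinarith))
    convert add_mem H1 H2 using 1
    ext p q
    have hc : u p.2 * star (v q.2) = 0 := by rcases h0 with h | h <;> simp [h]
    have hc' : v p.2 * star (u q.2) = 0 := by rcases h0 with h | h <;> simp [h]
    simp only [Matrix.of_apply, hc, hc', Matrix.add_apply]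
    simp [vecMulVec_apply]
  · push Not at h0
    have ha1 : 0 < a := lt_of_le_of_ne ha0 fun h => h0.1 (by
      rw [← dotProduct_star_self_eq_zero, ha, ← h]; simp)
    have hb1 : 0 < b := lt_of_le_of_ne hb0 fun h => h0.2 (by
      rw [← dotProduct_star_self_eq_zero, hb, ← h]; simp)
    set γ := α - β with hγ
    set P := (a + b) / a + α with hP
    set Q := (a + b) / b + β with hQ
    have hPa : P * a = a + b + α * a := by rw [hP]; field_simp
    have hQb : Q * b = a + b + β * b := by rw [hQ]; field_simp
    have hP0 : 0 < P := by
      have : 0 < P * a := by rw [hPa]; nlinarith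
      exact pos_of_mul_pos_left this ha0
    have hQ0 : 0 < Q := by
      have : 0 < Q * b := by rw [hQb]; nlinarith
      exact pos_of_mul_pos_left this hb0
    have i1 : γ ^ 2 ≤ P * ((a + b) / b + α) :=
      ineq_aux α γ a b ha1 hb1 h1 (by linarith) (by linarith)
    have i2 : γ ^ 2 ≤ ((a + b) / a + β) * Q :=
      ineq_aux β γ a b ha1 hb1 h2 (by linarith) (by linarith)
    have j1 : γ ^ 2 / P ≤ (a + b) / b + α := by rw [div_le_iff₀ hP0]; linarith
    have j2 : γ ^ 2 / Q ≤ (a + b) / a + β := by rw [div_le_iff₀ hQ0]; linarith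
    have j1' : 0 ≤ a + b + (α - γ ^ 2 / P) * b := by
      have := mul_le_mul_of_nonneg_right j1 hb0
      have e1 : ((a + b) / b + α) * b = a + b + α * b := by field_simp
      linarith
    have j2' : 0 ≤ a + b + (β - γ ^ 2 / Q) * a := by
      have := mul_le_mul_of_nonneg_right j2 ha0
      have e1 : ((a + b) / a + β) * a = a + b + β * a := by field_simp
      linarith
    have H1 := sepCone_prod hE (psd_orth u v a b (a + b) (α - P) (β - Q) ha hb huv hs
      (by linarith) (by linarith))
    have H2 := sepCone_prod hF (psd_orth u v a b (a + b) (β - γ ^ 2 / Q) (α - γ ^ 2 / P) ha hb huv hs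
      j2' j1')
    obtain ⟨p, hp0, hp⟩ : ∃ p : ℝ, 0 < p ∧ p ^ 2 = P := ⟨√P, by positivity, Real.sq_sqrt hP0.le⟩
    obtain ⟨q, hq0, hq⟩ : ∃ q : ℝ, 0 < q ∧ q ^ 2 = Q := ⟨√Q, by positivity, Real.sq_sqrt hQ0.le⟩
    obtain ⟨x, hx⟩ : ∃ x : ℝ, x * p * q = γ := ⟨γ / (p * q), by field_simp⟩
    have hxP : γ ^ 2 / P = x ^ 2 * q ^ 2 := by rw [← hp, ← hx]; field_simp
    have hxQ : γ ^ 2 / Q = x ^ 2 * p ^ 2 := by rw [← hq, ← hx]; field_simp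
    have T : ∀ w : ℂ, _ := fun w => sepCone_prod
      (psd_smul (posSemidef_vecMulVec_self_star (fun i => e i + w * (x * f i))) (c := 1 / 4) (by norm_num))
      (posSemidef_vecMulVec_self_star (fun i => (p : ℂ) * u i + star w * (q * v i)))
    convert add_mem (add_mem H1 H2)
      (add_mem (add_mem (add_mem (T 1) (T (-1))) (T Complex.I)) (T (-Complex.I))) using 1
    ext y z
    have key := avg_phase (e y.1) (star (e z.1)) (x * f y.1) (x * star (f z.1)) (p * u y.2)
      (p * star (u z.2)) (q * v y.2) (q * star (v z.2))
    rw [hxP, hxQ, ← hp, ← hq, hγ.symm.trans hx.symm |> fun h => (by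
      have : (α : ℂ) - β = x * p * q := by exact_mod_cast h
      exact this : (α : ℂ) - β = x * p * q)]
    simp [vecMulVec_apply, Matrix.add_apply] at key ⊢
    linear_combination (-1 / 4) * key

/-- The Breuer-Hall-type map on `Fin 2 × ι`. -/
def lamMap {ι : Type} [Fintype ι] [DecidableEq ι] (α β : ℝ)
    (τ : Matrix (Fin 2 × ι) (Fin 2 × ι) ℂ) : Matrix (Fin 2 × ι) (Fin 2 × ι) ℂ :=
  Matrix.of fun p q => τ.trace * (1 : Matrix (Fin 2 × ι) (Fin 2 × ι) ℂ) p q + (α - β) * τ p q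
    + β * ((1 : Matrix (Fin 2) (Fin 2) ℂ) p.1 q.1 * ∑ k, τ (k, p.2) (k, q.2))

open Matrix in
lemma lamMap_rankOne {ι : Type} [Fintype ι] [DecidableEq ι] (α β : ℝ) (ψ : Fin 2 × ι → ℂ)
    (h1 : -1 ≤ α) (h2 : -1 ≤ β) (h3 : β / 2 - 1 ≤ α) (h4 : α / 2 - 1 ≤ β) :
    lamMap α β (vecMulVec ψ (star ψ)) ∈ sepCone ι := by
  set Ψ : Matrix (Fin 2) ι ℂ := Matrix.of fun i x => ψ (i, x) with hΨ
  have hG : (Ψ * Ψᴴ).IsHermitian := isHermitian_mul_conjTranspose_self Ψ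
  obtain ⟨U, hUU, hUU', D, hD⟩ : ∃ U : Matrix (Fin 2) (Fin 2) ℂ, U * Uᴴ = 1 ∧ Uᴴ * U = 1 ∧
      ∃ D : Fin 2 → ℝ, Uᴴ * (Ψ * Ψᴴ) * U = diagonal (fun i => (D i : ℂ)) := by
    refine ⟨hG.eigenvectorUnitary, ?_, ?_, hG.eigenvalues, ?_⟩
    · exact Unitary.coe_mul_star_self _
    · exact Unitary.coe_star_mul_self _
    · have := hG.conjStarAlgAut_star_eigenvectorUnitary
      rw [Unitary.conjStarAlgAut_apply] at this
      rw [← Matrix.star_eq_conjTranspose]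
      simpa [Function.comp_def] using this
  set Φ := Uᴴ * Ψ with hΦ
  have hΨΦ : Ψ = U * Φ := by rw [hΦ, ← Matrix.mul_assoc, hUU, Matrix.one_mul]
  have hD' : Φ * Φᴴ = diagonal (fun i => (D i : ℂ)) := by
    rw [← hD, hΦ]; simp [Matrix.mul_assoc]
  have hdot : ∀ i j, star (Φ i) ⬝ᵥ Φ j = diagonal (fun i => (D i : ℂ)) j i := by
    intro i j
    rw [← hD', mul_apply]
    simp [dotProduct, mul_comm]
  have hψ : ∀ i x, ψ (i, x) = U i 0 * Φ 0 x + U i 1 * Φ 1 x := by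
    intro i x
    have := congrFun (congrFun hΨΦ i) x
    rw [mul_apply, Fin.sum_univ_two] at this
    exact this
  have hU1 : ∀ i j, U i 0 * star (U j 0) + U i 1 * star (U j 1) = (1 : Matrix (Fin 2) (Fin 2) ℂ) i j := by
    intro i j
    rw [← hUU, mul_apply, Fin.sum_univ_two]; simp
  have hU2 : ∀ i j, star (U 0 i) * U 0 j + star (U 1 i) * U 1 j = (1 : Matrix (Fin 2) (Fin 2) ℂ) i j := by
    intro i j
    rw [← hUU', mul_apply, Fin.sum_univ_two]; simp
  have u00 := hU2 0 0
  have u01 := hU2 0 1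
  have u10 := hU2 1 0
  have u11 := hU2 1 1
  simp only [one_apply_eq, ne_eq, zero_ne_one, not_false_eq_true, one_apply_ne, one_ne_zero] at u00 u01 u10 u11
  have main := sep_orth (Φ 0) (Φ 1) (fun i => U i 0) (fun i => U i 1) (D 0) (D 1) α β
    (by rw [hdot]; simp) (by rw [hdot]; simp) (by rw [hdot]; simp) h1 h2 h3 h4
  have hred : ∀ x y, ∑ k, vecMulVec ψ (star ψ) (k, x) (k, y) =
      Φ 0 x * star (Φ 0 y) + Φ 1 x * star (Φ 1 y) := by
    intro x y
    simp only [vecMulVec_apply, Pi.star_apply, Fin.sum_univ_two, hψ, star_add, star_mul']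
    linear_combination (Φ 0 x * star (Φ 0 y)) * u00 + (Φ 1 x * star (Φ 1 y)) * u11
      + (Φ 1 x * star (Φ 0 y)) * u01 + (Φ 0 x * star (Φ 1 y)) * u10
  have htr : (vecMulVec ψ (star ψ)).trace = D 0 + D 1 := by
    have e0 := hdot 0 0
    have e1 := hdot 1 1
    simp only [diagonal_apply_eq] at e0 e1
    rw [Matrix.trace, Fintype.sum_prod_type_right]
    simp only [diag_apply, hred, Finset.sum_add_distrib]
    rw [← e0, ← e1]
    simp [dotProduct, mul_comm]
  convert main using 1
  ext p q
  obtain ⟨i, x⟩ := p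
  obtain ⟨j, y⟩ := q
  have h11 : (1 : Matrix (Fin 2 × ι) (Fin 2 × ι) ℂ) (i, x) (j, y) =
      (1 : Matrix (Fin 2) (Fin 2) ℂ) i j * (1 : Matrix ι ι ℂ) x y := by
    simp only [one_apply, Prod.mk.injEq]
    by_cases h : i = j <;> by_cases h' : x = y <;> simp [h, h']
  simp only [lamMap, of_apply, htr, hred, h11]
  simp only [← hU1, vecMulVec_apply, Pi.star_apply, hψ, star_add,
    star_mul']
  ring

open Matrix MatrixOrder Matrix.Norms.L2Operator in
lemma lamMap_sep {ι : Type} [Fintype ι] [DecidableEq ι] (α β : ℝ)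
    (τ : Matrix (Fin 2 × ι) (Fin 2 × ι) ℂ) (hτ : τ.PosSemidef)
    (h1 : -1 ≤ α) (h2 : -1 ≤ β) (h3 : β / 2 - 1 ≤ α) (h4 : α / 2 - 1 ≤ β) :
    lamMap α β τ ∈ sepCone ι := by
  obtain ⟨C, hC⟩ := CStarAlgebra.nonneg_iff_eq_star_mul_self.mp hτ.nonneg
  have e : τ = ∑ k, vecMulVec (star (C k)) (star (star (C k))) := by
    rw [hC]; ext p q
    simp [star_eq_conjTranspose, mul_apply, Matrix.sum_apply, vecMulVec_apply]
  have hl : lamMap α β τ = ∑ k, lamMap α β (vecMulVec (star (C k)) (star (star (C k)))) := by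
    ext p q
    conv_lhs => rw [e]
    simp only [lamMap, of_apply, Matrix.sum_apply, Matrix.trace_sum, Finset.sum_add_distrib,
      Finset.mul_sum, Finset.sum_mul]
    congr 1
    rw [Finset.sum_comm]
  rw [hl]
  exact sum_mem fun k _ => lamMap_rankOne α β _ h1 h2 h3 h4

open Matrix in
lemma sep_of_inverse {ι : Type} [Fintype ι] [DecidableEq ι] (α β : ℝ) (n : ℝ)
    (hn : (Fintype.card (Fin 2 × ι) : ℝ) = n) (hn0 : n + α + β ≠ 0)
    (hαβ : α ^ 2 ≠ β ^ 2) (σ τ : Matrix (Fin 2 × ι) (Fin 2 × ι) ℂ)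
    (hτ : ∀ p q, τ p q = (((α ^ 2 - β ^ 2)⁻¹ : ℝ) : ℂ) * (α * σ p q
      - β * ((1 : Matrix (Fin 2) (Fin 2) ℂ) p.1 q.1 * (∑ k, σ (k, p.2) (k, q.2)) - σ p q)
      - (((α - β) / (n + α + β) : ℝ) : ℂ) * (σ.trace * (1 : Matrix (Fin 2 × ι) (Fin 2 × ι) ℂ) p q))) :
    σ = lamMap α β τ := by
  have hne : (α : ℂ) ^ 2 - β ^ 2 ≠ 0 := by
    have := sub_ne_zero.mpr hαβ
    exact_mod_cast this
  have hDne : (n : ℂ) + α + β ≠ 0 := by exact_mod_cast hn0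
  have hnC : (Fintype.card (Fin 2 × ι) : ℂ) = (n : ℂ) := by exact_mod_cast congrArg (fun r : ℝ => (r : ℂ)) hn
  have h11 : ∀ (i j : Fin 2) (x y : ι), (1 : Matrix (Fin 2 × ι) (Fin 2 × ι) ℂ) (i, x) (j, y) =
      (1 : Matrix (Fin 2) (Fin 2) ℂ) i j * (1 : Matrix ι ι ℂ) x y := by
    intro i j x y
    simp only [one_apply, Prod.mk.injEq]
    by_cases h : i = j <;> by_cases h' : x = y <;> simp [h, h']
  have hp : ∀ x y, ∑ k, τ (k, x) (k, y) = (((α ^ 2 - β ^ 2)⁻¹ : ℝ) : ℂ) *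
      ((α - β) * (∑ k, σ (k, x) (k, y))
        - (((α - β) / (n + α + β) : ℝ) : ℂ) * (σ.trace * (2 * (1 : Matrix ι ι ℂ) x y))) := by
    intro x y
    simp only [Fin.sum_univ_two, hτ, h11, one_apply_eq]
    ring
  have hptr : ∀ M : Matrix (Fin 2 × ι) (Fin 2 × ι) ℂ, M.trace = ∑ x, ∑ k, M (k, x) (k, x) := by
    intro M
    rw [Matrix.trace, Fintype.sum_prod_type_right]; rfl
  have htr : τ.trace = σ.trace / (n + α + β) := by
    have hcard : (n : ℂ) = 2 * Fintype.card ι := by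
      rw [← hnC]; simp
    rw [hptr τ]
    simp only [hp, ← Finset.mul_sum, Finset.sum_sub_distrib, ← hptr σ, one_apply_eq]
    simp only [Finset.sum_const, Finset.card_univ, nsmul_eq_mul]
    push_cast
    rw [hcard] at hDne ⊢
    field_simp
    ring
  ext p q
  obtain ⟨i, x⟩ := p
  obtain ⟨j, y⟩ := q
  simp only [lamMap, of_apply, hp, htr]
  simp only [hτ, h11]
  push_cast
  field_simp
  ring

/-- Splitting off the qubit `z`. -/
def glue {N : ℕ} (z : Fin N) :
    Fin 2 × ({i // i ∈ ({z} : Finset (Fin N))ᶜ} → Fin 2) ≃ (Fin N → Fin 2) where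
  toFun p := fun i => if h : i ∈ ({z} : Finset (Fin N))ᶜ then p.2 ⟨i, h⟩ else p.1
  invFun x := (x z, fun i => x i.1)
  left_inv p := by
    ext i
    · simp
    · simp only [i.2, dite_true]
  right_inv x := by
    funext i
    by_cases h : i = z
    · subst h; simp
    · simp [h]

lemma glue_z {N : ℕ} (z : Fin N) (p) : glue z p z = p.1 := by simp [glue]

lemma glue_ne {N : ℕ} (z : Fin N) (p) (i : Fin N) (h : i ∈ ({z} : Finset (Fin N))ᶜ) :
    glue z p i = p.2 ⟨i, h⟩ := by simp only [glue, Equiv.coe_fn_mk, h, dite_true]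

lemma pauliYat_glue {N : ℕ} (z : Fin N) (p q) :
    pauliYat {z} (glue z p) (glue z q) = pauliY p.1 q.1 * if p.2 = q.2 then 1 else 0 := by
  unfold pauliYat
  rw [← Finset.mul_prod_erase _ _ (Finset.mem_univ z)]
  simp only [Finset.mem_singleton, if_true, glue_z]
  congr 1
  rw [Finset.prod_congr rfl (g := fun i => if glue z p i = glue z q i then (1 : ℂ) else 0)
    (fun i hi => by rw [if_neg (Finset.ne_of_mem_erase hi)])]
  rw [Finset.prod_ite_zero]
  simp only [Finset.prod_const_one]
  congr 1
  simp only [eq_iff_iff]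
  constructor
  · intro h
    funext i
    have h' := h i.1 (Finset.mem_erase.mpr ⟨fun hz => Finset.mem_compl.mp i.2 (Finset.mem_singleton.mpr hz),
      Finset.mem_univ _⟩)
    rwa [glue_ne z p i.1 i.2, glue_ne z q i.1 i.2] at h'
  · intro h i hi
    have hi' : i ∈ ({z} : Finset (Fin N))ᶜ := by simpa using Finset.ne_of_mem_erase hi
    rw [glue_ne z p i hi', glue_ne z q i hi', h]

lemma pt_glue {N : ℕ} (z : Fin N) (σ : Matrix (Fin N → Fin 2) (Fin N → Fin 2) ℂ) (i j x y) :
    pt {z} σ (glue z (i, x)) (glue z (j, y)) = σ (glue z (j, x)) (glue z (i, y)) := by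
  unfold pt
  congr 1
  all_goals
    funext l
    by_cases h : l = z
    · subst h; simp [glue_z]
    · have hi' : l ∈ ({z} : Finset (Fin N))ᶜ := by simpa using h
      simp only [Finset.mem_singleton, h, if_false, glue_ne z _ l hi']

lemma tilde_glue {N : ℕ} (z : Fin N) (σ : Matrix (Fin N → Fin 2) (Fin N → Fin 2) ℂ) (p q) :
    tildeAt {z} σ (glue z p) (glue z q) =
      (1 : Matrix (Fin 2) (Fin 2) ℂ) p.1 q.1 *
        (∑ k, σ (glue z (k, p.2)) (glue z (k, q.2))) - σ (glue z p) (glue z q) := by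
  obtain ⟨i, x⟩ := p
  obtain ⟨j, y⟩ := q
  unfold tildeAt
  simp only [Matrix.mul_apply, ← (glue z).sum_comp, pauliYat_glue]
  simp only [Fintype.sum_prod_type, pt_glue]
  simp only [mul_ite, mul_one, mul_zero, ite_mul, zero_mul, Finset.sum_ite_eq, Finset.sum_ite_eq',
    Finset.mem_univ, if_true, Fin.sum_univ_two]
  fin_cases i <;> fin_cases j <;> simp [pauliY] <;> ring_nf <;> simp

lemma sepAcross_of_mem {N : ℕ} (z : Fin N) (σ : Matrix (Fin N → Fin 2) (Fin N → Fin 2) ℂ)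
    (h : σ.submatrix (glue z) (glue z) ∈ sepCone ({i // i ∈ ({z} : Finset (Fin N))ᶜ} → Fin 2)) :
    SepAcross {z} σ := by
  obtain ⟨l, hl, hs⟩ := AddSubmonoid.exists_list_of_mem_closure h
  have hl' : ∀ k : Fin l.length, _ := fun k => hl (l.get k) (List.get_mem l k)
  choose A B hA hB hAB using hl'
  refine ⟨l.length, fun k => (A k).submatrix (fun f => f ⟨z, by simp⟩) (fun f => f ⟨z, by simp⟩),
    B, fun k => (hA k).submatrix _, hB, ?_⟩
  intro x y
  have e : σ x y = (σ.submatrix (glue z) (glue z)) ((glue z).symm x) ((glue z).symm y) := by simp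
  have hs' : l.sum = ∑ k : Fin l.length, l.get k := by simp [Fin.sum_univ_getElem]
  rw [e, ← hs, hs', Matrix.sum_apply]
  refine Finset.sum_congr rfl fun k _ => ?_
  rw [hAB k]
  rfl

/-- Sufficient `(N-1)`-depth criterion from the inverse of the Breuer-Hall-inspired map. -/
theorem stmt12 (N : ℕ) (hN : 2 ≤ N)
    (α β : ℝ) (hα : max (-1) (β / 2 - 1) ≤ α) (hβ : max (-1) (α / 2 - 1) ≤ β)
    (hαβ : α ^ 2 ≠ β ^ 2)
    (σ : Matrix (Fin N → Fin 2) (Fin N → Fin 2) ℂ)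
    (h : ((((α ^ 2 - β ^ 2)⁻¹ : ℝ) : ℂ) •
        ((α : ℂ) • σ - (β : ℂ) • tildeAt {⟨0, by omega⟩} σ -
          (((α - β) / (2 ^ N + α + β) : ℝ) : ℂ) • σ.trace •
            (1 : Matrix (Fin N → Fin 2) (Fin N → Fin 2) ℂ))).PosSemidef) :
    SepAcross {⟨0, by omega⟩} σ := by
  have h1 : -1 ≤ α := le_trans (le_max_left _ _) hα
  have h2 : -1 ≤ β := le_trans (le_max_left _ _) hβ
  have h3 : β / 2 - 1 ≤ α := le_trans (le_max_right _ _) hα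
  have h4 : α / 2 - 1 ≤ β := le_trans (le_max_right _ _) hβ
  generalize (⟨0, by omega⟩ : Fin N) = z at h ⊢
  apply sepAcross_of_mem
  have h' := h.submatrix (glue z)
  have hpow : (2 : ℝ) ^ 2 ≤ 2 ^ N := pow_le_pow_right₀ (by norm_num) hN
  have key := sep_of_inverse α β (2 ^ N)
    (by rw [Fintype.card_congr (glue z)]; simp) (by nlinarith) hαβ
    (σ.submatrix (glue z) (glue z)) (Matrix.submatrix ((((α ^ 2 - β ^ 2)⁻¹ : ℝ) : ℂ) •
        ((α : ℂ) • σ - (β : ℂ) • tildeAt {z} σ -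
          (((α - β) / (2 ^ N + α + β) : ℝ) : ℂ) • σ.trace •
            (1 : Matrix (Fin N → Fin 2) (Fin N → Fin 2) ℂ))) (glue z) (glue z)) (fun p q => by
      have htr : (σ.submatrix (glue z) (glue z)).trace = σ.trace := by
        simp only [Matrix.trace, Matrix.diag_apply, Matrix.submatrix_apply]
        exact (glue z).sum_comp (fun x => σ x x)
      have hone : (1 : Matrix (Fin N → Fin 2) (Fin N → Fin 2) ℂ) (glue z p) (glue z q) =
          (1 : Matrix _ _ ℂ) p q := by
        simp [Matrix.one_apply]
      simp only [Matrix.submatrix_apply]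
      rw [htr, ← tilde_glue, ← hone]
      rfl)
  rw [key]
  exact lamMap_sep α β _ h' h1 h2 h3 h4
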